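/- For every rational number x with 1/2 ≤ x < 1, the entropy satisfies the functional (de Rham type) scaling equation S(x) = (x + 2)·H(1/(x + 2)); equivalently, S(x) = (x + 2)·S(1/(x + 2)) + x·ln x − (x + 2)·ln(x + 2). (Note 1/(x+2) ∈ (0,1/2), so H(1/(x+2)) is given by the first branch of the definition of H.) -/

import Mathlib

/-- Symbols for paths in the Farey binary tree. -/
inductive LR
  | L
  | R
deriving DecidableEq

/-- One step in the Farey binary tree: update the current pair of fractions
(represented as pairs (numerator, denominator) of naturals). -/
def fareyStep : ((ℕ × ℕ) × (ℕ × ℕ)) → LR → ((ℕ × ℕ) × (ℕ × ℕ))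
  | ((a, b), (c, d)), LR.L => ((a, b), (a + c, b + d))
  | ((a, b), (c, d)), LR.R => ((a + c, b + d), (c, d))

/-- The final pair of fractions of a word: after reading the first symbol `L`
the current pair is (0/1, 1/1); the remaining symbols update it. -/
def finalPair (w : List LR) : (ℕ × ℕ) × (ℕ × ℕ) :=
  w.tail.foldl fareyStep ((0, 1), (1, 1))

/-- The value ⟨w⟩ of a word: the mediant of its final pair, as (numerator, denominator). -/
def value (w : List LR) : ℕ × ℕ :=
  ((finalPair w).1.1 + (finalPair w).2.1, (finalPair w).1.2 + (finalPair w).2.2)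

/-- A word over {L,R} is a Farey word when its first symbol is `L`. -/
def IsFareyWord (w : List LR) : Prop := w.head? = some LR.L

/-- Concatenation of degree sequences:
[a₁,…,a_s] ⊕ [b₁,…,b_t] = [a₁+1, a₂, …, a_{s−1}, a_s+b₁, b₂, …, b_{t−1}, b_t+1]. -/
def oplus (A B : List ℕ) : List ℕ :=
  (A.dropLast.modifyHead (· + 1)) ++ [A.getLastD 0 + B.headD 0] ++ B.tail.dropLast
    ++ [B.getLastD 0 + 1]

/-- Update of the pair (D(left ancestor), D(right ancestor)) of unreduced degree
sequences along one symbol. -/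
def degStep : (List ℕ × List ℕ) → LR → (List ℕ × List ℕ)
  | (A, B), LR.L => (A, oplus A B)
  | (A, B), LR.R => (oplus A B, B)

/-- The pair (D(a/b), D(c/d)) of unreduced degree sequences of the final pair of a word;
0/1 and 1/1 are both assigned the list [1,1]. -/
def degPair (w : List LR) : List ℕ × List ℕ :=
  w.tail.foldl degStep ([1, 1], [1, 1])

/-- The unreduced degree sequence D(⟨w⟩) = D(a/b) ⊕ D(c/d) of the value of a word. -/
def Dseq (w : List LR) : List ℕ :=
  oplus (degPair w).1 (degPair w).2

/-- Reduction: [k₁,…,k_{q+1}] becomes [k₂,…,k_q, k₁+k_{q+1}]; the last entry is the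
boundary degree and the remaining ones are the inner degrees. -/
def reduce (D : List ℕ) : List ℕ :=
  D.tail.dropLast ++ [D.headD 0 + D.getLastD 0]

/-- The reduced degree sequence of the Haros graph G_{⟨w⟩}. -/
def degSeq (w : List LR) : List ℕ := reduce (Dseq w)

/-- Degree-distribution entropy S of the Haros graph G_{⟨w⟩}:
S = −Σ_k P(k)·ln P(k), summed over the degree values occurring in the reduced
degree sequence, where P(k) = m(k)/q. -/
noncomputable def Sent (w : List LR) : ℝ :=
  -∑ k ∈ (degSeq w).toFinset,
    (((degSeq w).count k : ℝ) / ((value w).2 : ℝ)) *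
      Real.log (((degSeq w).count k : ℝ) / ((value w).2 : ℝ))

/-- Reduced entropy H of the Haros graph G_{⟨w⟩} (with the convention 0·ln 0 = 0,
automatic since Real.log 0 = 0). -/
noncomputable def Hent (w : List LR) : ℝ :=
  let x : ℝ := ((value w).1 : ℝ) / ((value w).2 : ℝ)
  if x ≤ 1 / 2 then
    Sent w + 2 * x * Real.log x + (1 - 2 * x) * Real.log (1 - 2 * x)
  else
    Sent w + 2 * (1 - x) * Real.log (1 - x) + (2 * x - 1) * Real.log (2 * x - 1)

/-!
The map `x ↦ 1/(x+2)` acts on the Farey tree: it reverses the order and sends `0/1, 1/1` to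
`1/2, 1/3`, so the path of `1/(x+2)` is `LLR` followed by the path of `x` without its initial `L`
and with its symbols exchanged. Following the degree sequences along these two paths shows that,
for `1/2 ≤ x = p/q < 1`, the degrees of `1/(x+2)` are those of `x`, relabelled by a map that is
injective on them and takes values above `3`, together with `q` new vertices of degree `2` and `p`
of degree `3`. Since `q S(x) = q log q - ∑ m log m` over the multiplicities `m`, and the
multiplicities for `1/(x+2)` are those for `x` together with `p` and `q`, the scaling equation
becomes an identity between logarithms.
-/

/-- Exchange of the two symbols of a Farey path, as effected by an order-reversing map. -/
def LR.swap : LR → LR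
  | LR.L => LR.R
  | LR.R => LR.L

namespace HarosEntropy

/-- The path of `1/(x+2)` in terms of the path `w` of `x`. -/
def invAddTwo (w : List LR) : List LR :=
  LR.L :: LR.L :: LR.R :: w.tail.map LR.swap

theorem fareyStep_L (F : (ℕ × ℕ) × (ℕ × ℕ)) : fareyStep F LR.L = (F.1, F.1 + F.2) := rfl

theorem fareyStep_R (F : (ℕ × ℕ) × (ℕ × ℕ)) : fareyStep F LR.R = (F.1 + F.2, F.2) := rfl

theorem finalPair_concat {w : List LR} (hw : w ≠ []) (s : LR) :
    finalPair (w ++ [s]) = fareyStep (finalPair w) s := by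
  simp [finalPair, List.tail_append_of_ne_nil hw]

theorem degPair_concat {w : List LR} (hw : w ≠ []) (s : LR) :
    degPair (w ++ [s]) = degStep (degPair w) s := by
  simp [degPair, List.tail_append_of_ne_nil hw]

theorem invAddTwo_concat {w : List LR} (hw : w ≠ []) (s : LR) :
    invAddTwo (w ++ [s]) = invAddTwo w ++ [s.swap] := by
  simp [invAddTwo, List.tail_append_of_ne_nil hw]

/-! ### Uniqueness of Farey paths -/

/-- Coefficients `(m, n)` such that reading the word from the pair `(u, v)` leads to a pair with
mediant `m • u + n • v`. -/
def mediantCoeffs : List LR → ℕ × ℕ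
  | [] => (1, 1)
  | LR.L :: t => ((mediantCoeffs t).1 + (mediantCoeffs t).2, (mediantCoeffs t).2)
  | LR.R :: t => ((mediantCoeffs t).1, (mediantCoeffs t).1 + (mediantCoeffs t).2)

theorem mediantCoeffs_pos (t : List LR) :
    0 < (mediantCoeffs t).1 ∧ 0 < (mediantCoeffs t).2 := by
  induction t with
  | nil => simp [mediantCoeffs]
  | cons s t ih => cases s <;> simp only [mediantCoeffs] <;> omega

theorem mediantCoeffs_map_swap (t : List LR) :
    mediantCoeffs (t.map LR.swap) = (mediantCoeffs t).swap := by
  induction t with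
  | nil => rfl
  | cons s t ih => cases s <;> simp [LR.swap, mediantCoeffs, ih, add_comm]

/-- The first symbol of a word is read off from which of its two coefficients is larger. -/
theorem mediantCoeffs_injective : Function.Injective mediantCoeffs := by
  intro t
  induction t with
  | nil =>
    rintro (_ | ⟨_ | _, u⟩) h
    · rfl
    all_goals
      have hu := mediantCoeffs_pos u
      simp only [mediantCoeffs, Prod.ext_iff] at h
      omega
  | cons s t ih =>
    have ht := mediantCoeffs_pos t
    rintro (_ | ⟨s', u⟩) h
    · cases s <;> simp only [mediantCoeffs, Prod.ext_iff] at h <;> omega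
    · have hu := mediantCoeffs_pos u
      obtain ⟨rfl, hcoeffs⟩ : s = s' ∧ mediantCoeffs t = mediantCoeffs u := by
        cases s <;> cases s' <;> simp only [mediantCoeffs, Prod.ext_iff] at h <;>
          simp only [Prod.ext_iff, reduceCtorEq, true_and, false_and] <;> omega
      rw [ih hcoeffs]

theorem mediant_foldl_fareyStep (t : List LR) (u v : ℕ × ℕ) :
    (t.foldl fareyStep (u, v)).1 + (t.foldl fareyStep (u, v)).2 =
      (mediantCoeffs t).1 • u + (mediantCoeffs t).2 • v := by
  induction t generalizing u v with
  | nil => simp [mediantCoeffs]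
  | cons s t ih =>
    cases s <;> simp only [List.foldl_cons, fareyStep_L, fareyStep_R, ih, mediantCoeffs] <;> module

theorem value_eq_mediantCoeffs (w : List LR) :
    value w = ((mediantCoeffs w.tail).2,
      (mediantCoeffs w.tail).1 + (mediantCoeffs w.tail).2) :=
  (mediant_foldl_fareyStep w.tail (0, 1) (1, 1)).trans (by simp)

theorem value_fst_pos (w : List LR) : 0 < (value w).1 := by
  rw [value_eq_mediantCoeffs]
  exact (mediantCoeffs_pos _).2

theorem value_snd_pos (w : List LR) : 0 < (value w).2 := by
  rw [value_eq_mediantCoeffs]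
  exact Nat.add_pos_left (mediantCoeffs_pos _).1 _

theorem value_injOn : Set.InjOn value {w | IsFareyWord w} := by
  intro w hw w' hw' h
  obtain ⟨t, rfl⟩ := List.head?_eq_some_iff.1 hw
  obtain ⟨t', rfl⟩ := List.head?_eq_some_iff.1 hw'
  simp only [value_eq_mediantCoeffs, List.tail_cons, Prod.mk.injEq] at h
  rw [mediantCoeffs_injective (Prod.ext (by omega) h.1 : mediantCoeffs t = mediantCoeffs t')]

theorem value_invAddTwo (w : List LR) :
    value (invAddTwo w) = ((value w).2, (value w).1 + 2 * (value w).2) := by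
  simp only [value_eq_mediantCoeffs, invAddTwo, List.tail_cons, mediantCoeffs,
    mediantCoeffs_map_swap, Prod.fst_swap, Prod.snd_swap, Prod.mk.injEq]
  omega

theorem eq_singleton_or_eq_cons_cons_of_half_le_value {w : List LR} (hw : IsFareyWord w)
    (hle : (value w).2 ≤ 2 * (value w).1) :
    w = [LR.L] ∨ ∃ u, w = LR.L :: LR.R :: u := by
  obtain ⟨t, rfl⟩ := List.head?_eq_some_iff.1 hw
  match t, hle with
  | [], _ => exact .inl rfl
  | LR.R :: u, _ => exact .inr ⟨u, rfl⟩
  | LR.L :: u, hle =>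
    have hu := mediantCoeffs_pos u
    simp only [value_eq_mediantCoeffs, List.tail_cons, mediantCoeffs] at hle
    omega

/-! ### Degree sequences -/

/-- The degree sequence without its two end entries. -/
def innerDegrees (D : List ℕ) : List ℕ := D.tail.dropLast

section Oplus

variable {A B : List ℕ}

theorem headD_oplus (B : List ℕ) (hA : 2 ≤ A.length) : (oplus A B).headD 0 = A.headD 0 + 1 := by
  match A, hA with
  | a :: a' :: I, _ => simp [oplus]

theorem getLastD_oplus (A B : List ℕ) : (oplus A B).getLastD 0 = B.getLastD 0 + 1 :=
  List.getLastD_concat ..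

theorem innerDegrees_oplus (B : List ℕ) (hA : 2 ≤ A.length) :
    innerDegrees (oplus A B) = innerDegrees A ++ (A.getLastD 0 + B.headD 0) :: innerDegrees B := by
  match A, hA with
  | a :: a' :: I, _ => simp [oplus, innerDegrees, List.dropLast_cons_of_ne_nil]

theorem two_le_length_oplus (A B : List ℕ) : 2 ≤ (oplus A B).length := by
  simp only [oplus, List.length_append, List.length_singleton]
  omega

theorem length_oplus (hA : 2 ≤ A.length) (hB : 2 ≤ B.length) :
    (oplus A B).length + 1 = A.length + B.length := by
  simp only [oplus, List.length_append, List.length_modifyHead, List.length_dropLast,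
    List.length_tail, List.length_singleton]
  omega

theorem reduce_oplus (B : List ℕ) (hA : 2 ≤ A.length) :
    reduce (oplus A B) = innerDegrees A ++ (A.getLastD 0 + B.headD 0) :: innerDegrees B
      ++ [A.headD 0 + 1 + (B.getLastD 0 + 1)] := by
  rw [← innerDegrees_oplus B hA, ← headD_oplus B hA, ← getLastD_oplus A B]
  rfl

end Oplus

theorem two_le_length_degPair (w : List LR) :
    2 ≤ (degPair w).1.length ∧ 2 ≤ (degPair w).2.length := by
  refine List.foldlRecOn (motive := fun P ↦ 2 ≤ P.1.length ∧ 2 ≤ P.2.length) w.tail degStep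
    ?_ fun P hP s _ ↦ ?_
  · decide
  · cases s
    exacts [⟨hP.1, two_le_length_oplus _ _⟩, ⟨two_le_length_oplus _ _, hP.2⟩]

theorem length_degPair (w : List LR) :
    (degPair w).1.length = (finalPair w).1.2 + 1 ∧
      (degPair w).2.length = (finalPair w).2.2 + 1 := by
  induction w using List.reverseRecOn with
  | nil => exact ⟨rfl, rfl⟩
  | append_singleton w s ih =>
    obtain rfl | hw := eq_or_ne w []
    · exact ⟨rfl, rfl⟩
    · have hlen := two_le_length_degPair w
      have hoplus := length_oplus hlen.1 hlen.2
      rw [degPair_concat hw, finalPair_concat hw]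
      cases s <;> simp only [degStep, fareyStep_L, fareyStep_R, Prod.snd_add] <;> omega

theorem length_degSeq (w : List LR) : (degSeq w).length = (value w).2 := by
  have hlen := length_degPair w
  have htwo := two_le_length_degPair w
  simp only [degSeq, Dseq, value, reduce_oplus _ htwo.1, innerDegrees, List.length_append,
    List.length_cons, List.length_nil, List.length_dropLast, List.length_tail]
  omega

/-! ### The degrees of `1/(x+2)` -/

/-- The relabelling of the degrees of `x ∈ [1/2, 1)` induced by `x ↦ 1/(x+2)`. Degrees `2` and `3`
gain `3` because they arise by gluing to the sequence `[1, 1]` of `1/1`, whose image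
`[2, 3, 2, 3]` ends in `1 + 2`; in all other cases each of the two glued end entries gains `1`. -/
def degreeShift (k : ℕ) : ℕ := if k ≤ 3 then k + 3 else k + 2

theorem three_lt_degreeShift {k : ℕ} (hk : 2 ≤ k) : 3 < degreeShift k := by
  unfold degreeShift
  split_ifs <;> omega

/-- Degree `4` is excluded since `degreeShift` identifies it with `3`. -/
theorem degreeShift_injOn : Set.InjOn degreeShift {k | k ≠ 4} := by
  intro k (hk : k ≠ 4) l (hl : l ≠ 4) h
  unfold degreeShift at h
  split_ifs at h <;> omega

/-- What is known of the pair of degree sequences of two Farey neighbours in `[1/2, 1]`. The first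
alternative of `right_head` is the case of the right neighbour `1/1`. -/
structure AboveHalf (A B : List ℕ) : Prop where
  two_le_head : 2 ≤ A.headD 0
  two_le_last : 2 ≤ A.getLastD 0
  one_le_last : 1 ≤ B.getLastD 0
  right_head : (B.headD 0 = 1 ∧ B.getLastD 0 = 1 ∧ A.getLastD 0 = 2) ∨ 3 ≤ B.headD 0
  of_mem_left : ∀ k ∈ innerDegrees A, 2 ≤ k ∧ k ≠ 4
  of_mem_right : ∀ k ∈ innerDegrees B, 2 ≤ k ∧ k ≠ 4

namespace AboveHalf

variable {A B : List ℕ}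

theorem of_mem_innerDegrees_oplus (h : AboveHalf A B) (hA : 2 ≤ A.length) :
    ∀ k ∈ innerDegrees (oplus A B), 2 ≤ k ∧ k ≠ 4 := by
  have hjunction : 2 ≤ A.getLastD 0 + B.headD 0 ∧ A.getLastD 0 + B.headD 0 ≠ 4 := by
    have := h.two_le_last
    have := h.right_head
    omega
  simp only [innerDegrees_oplus B hA, List.forall_mem_append, List.forall_mem_cons]
  exact ⟨h.of_mem_left, hjunction, h.of_mem_right⟩

theorem of_mem_reduce_oplus (h : AboveHalf A B) (hA : 2 ≤ A.length) :
    ∀ k ∈ reduce (oplus A B), 2 ≤ k ∧ k ≠ 4 := by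
  have hboundary : 5 ≤ A.headD 0 + 1 + (B.getLastD 0 + 1) := by
    have := h.two_le_head
    have := h.one_le_last
    omega
  rw [reduce_oplus B hA, ← innerDegrees_oplus B hA]
  simp only [List.forall_mem_append, List.forall_mem_singleton]
  exact ⟨h.of_mem_innerDegrees_oplus hA, by omega, by omega⟩

theorem oplus_right (h : AboveHalf A B) (hA : 2 ≤ A.length) : AboveHalf A (oplus A B) where
  two_le_head := h.two_le_head
  two_le_last := h.two_le_last
  one_le_last := by rw [getLastD_oplus]; exact Nat.le_add_left ..
  right_head := .inr (by have := h.two_le_head; rw [headD_oplus B hA]; omega)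
  of_mem_left := h.of_mem_left
  of_mem_right := h.of_mem_innerDegrees_oplus hA

theorem oplus_left (h : AboveHalf A B) (hA : 2 ≤ A.length) : AboveHalf (oplus A B) B where
  two_le_head := by have := h.two_le_head; rw [headD_oplus B hA]; omega
  two_le_last := by have := h.one_le_last; rw [getLastD_oplus]; omega
  one_le_last := h.one_le_last
  right_head := by have := h.right_head; rw [getLastD_oplus]; omega
  of_mem_left := h.of_mem_innerDegrees_oplus hA
  of_mem_right := h.of_mem_right

end AboveHalf

theorem aboveHalf_degPair (u : List LR) :
    AboveHalf (degPair (LR.L :: LR.R :: u)).1 (degPair (LR.L :: LR.R :: u)).2 := by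
  induction u using List.reverseRecOn with
  | nil => constructor <;> decide
  | append_singleton u s ih =>
    have hlen := (two_le_length_degPair (LR.L :: LR.R :: u)).1
    rw [← List.cons_append, ← List.cons_append, degPair_concat (List.cons_ne_nil _ _)]
    cases s
    exacts [ih.oplus_right hlen, ih.oplus_left hlen]

/-- The multiset of degrees in which each degree of `s` is shifted, and `q` degrees `2` and `p`
degrees `3` are added, for a fraction `x = (p, q)`. -/
def shiftedDegrees (x : ℕ × ℕ) (s : Multiset ℕ) : Multiset ℕ :=
  s.map degreeShift + Multiset.replicate x.2 2 + Multiset.replicate x.1 3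

theorem shiftedDegrees_add (x y : ℕ × ℕ) (s t : Multiset ℕ) :
    shiftedDegrees (x + y) (s + t) = shiftedDegrees x s + shiftedDegrees y t := by
  simp only [shiftedDegrees, Prod.fst_add, Prod.snd_add, Multiset.map_add, Multiset.replicate_add]
  abel

theorem shiftedDegrees_cons (x : ℕ × ℕ) (k : ℕ) (s : Multiset ℕ) :
    shiftedDegrees x (k ::ₘ s) = degreeShift k ::ₘ shiftedDegrees x s := by
  simp [shiftedDegrees]

/-- The relation between the unreduced degree sequences `D` of `x ∈ [1/2, 1]` and `D'` of
`1/(x+2)`. The case distinction in `last` singles out `x = 1/1`, with `D = [1, 1]` and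
`D' = [2, 3, 2, 3]`. -/
structure IsInvAddTwo (x : ℕ × ℕ) (D D' : List ℕ) : Prop where
  head : D'.headD 0 = D.getLastD 0 + 1
  last : D'.getLastD 0 = if D.headD 0 = 1 then 3 else D.headD 0 + 1
  inner : (innerDegrees D' : Multiset ℕ) = shiftedDegrees x (innerDegrees D)

section InvAddTwo

variable {x y : ℕ × ℕ} {A B A' B' : List ℕ}

theorem AboveHalf.junction_eq (h : AboveHalf A B) (hA : IsInvAddTwo x A A')
    (hB : IsInvAddTwo y B B') :
    B'.getLastD 0 + A'.headD 0 = degreeShift (A.getLastD 0 + B.headD 0) := by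
  have := h.two_le_last
  have := h.right_head
  rw [hA.head, hB.last, degreeShift]
  split_ifs <;> omega

theorem IsInvAddTwo.coe_innerDegrees_oplus (hA : IsInvAddTwo x A A') (hB : IsInvAddTwo y B B')
    (h : AboveHalf A B) (hlen : 2 ≤ A.length) (hlen' : 2 ≤ B'.length) :
    (innerDegrees (oplus B' A') : Multiset ℕ) =
      shiftedDegrees (x + y) (innerDegrees (oplus A B)) := by
  simp only [innerDegrees_oplus _ hlen, innerDegrees_oplus _ hlen', h.junction_eq hA hB,
    ← Multiset.coe_add, ← Multiset.cons_coe, hA.inner, hB.inner, Multiset.add_cons,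
    shiftedDegrees_cons, shiftedDegrees_add]
  rw [add_comm (shiftedDegrees y _)]

theorem IsInvAddTwo.mediant (hA : IsInvAddTwo x A A') (hB : IsInvAddTwo y B B')
    (h : AboveHalf A B) (hlen : 2 ≤ A.length) (hlen' : 2 ≤ B'.length) :
    IsInvAddTwo (x + y) (oplus A B) (oplus B' A') where
  head := by rw [headD_oplus A' hlen', getLastD_oplus, hB.head]
  last := by
    have := h.two_le_head
    rw [headD_oplus B hlen, getLastD_oplus, hA.last, if_neg (by omega), if_neg (by omega)]
  inner := hA.coe_innerDegrees_oplus hB h hlen hlen'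

theorem IsInvAddTwo.coe_reduce_oplus (hA : IsInvAddTwo x A A') (hB : IsInvAddTwo y B B')
    (h : AboveHalf A B) (hlen : 2 ≤ A.length) (hlen' : 2 ≤ B'.length) :
    (reduce (oplus B' A') : Multiset ℕ) =
      shiftedDegrees (x + y) (reduce (oplus A B)) := by
  have hboundary : B'.headD 0 + 1 + (A'.getLastD 0 + 1) =
      degreeShift (A.headD 0 + 1 + (B.getLastD 0 + 1)) := by
    have := h.two_le_head
    have := h.one_le_last
    rw [hB.head, hA.last, degreeShift]
    split_ifs <;> omega
  simp only [reduce_oplus _ hlen, reduce_oplus _ hlen', ← innerDegrees_oplus _ hlen,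
    ← innerDegrees_oplus _ hlen', hboundary, ← Multiset.coe_add _ [_], Multiset.coe_singleton,
    add_comm _ ({_} : Multiset ℕ), Multiset.singleton_add, shiftedDegrees_cons,
    hA.coe_innerDegrees_oplus hB h hlen hlen']

end InvAddTwo

theorem isInvAddTwo_degPair (u : List LR) :
    IsInvAddTwo (finalPair (LR.L :: LR.R :: u)).1 (degPair (LR.L :: LR.R :: u)).1
        (degPair (invAddTwo (LR.L :: LR.R :: u))).2 ∧
      IsInvAddTwo (finalPair (LR.L :: LR.R :: u)).2 (degPair (LR.L :: LR.R :: u)).2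
        (degPair (invAddTwo (LR.L :: LR.R :: u))).1 := by
  induction u using List.reverseRecOn with
  | nil => constructor <;> constructor <;> decide
  | append_singleton u s ih =>
    have hlen := (two_le_length_degPair (LR.L :: LR.R :: u)).1
    have hlen' := (two_le_length_degPair (invAddTwo (LR.L :: LR.R :: u))).1
    have hmediant := ih.1.mediant ih.2 (aboveHalf_degPair u) hlen hlen'
    rw [← List.cons_append, ← List.cons_append, invAddTwo_concat (List.cons_ne_nil _ _),
      finalPair_concat (List.cons_ne_nil _ _), degPair_concat (List.cons_ne_nil _ _),
      degPair_concat (w := invAddTwo _) (List.cons_ne_nil _ _)]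
    cases s
    exacts [⟨ih.1, hmediant⟩, ⟨hmediant, ih.2⟩]

section DegSeq

variable {w : List LR} (hw : IsFareyWord w) (hle : (value w).2 ≤ 2 * (value w).1)
include hw hle

theorem coe_degSeq_invAddTwo :
    (degSeq (invAddTwo w) : Multiset ℕ) = shiftedDegrees (value w) (degSeq w) := by
  obtain rfl | ⟨u, rfl⟩ := eq_singleton_or_eq_cons_cons_of_half_le_value hw hle
  · decide
  · obtain ⟨hleft, hright⟩ := isInvAddTwo_degPair u
    exact hleft.coe_reduce_oplus hright (aboveHalf_degPair u) (two_le_length_degPair _).1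
      (two_le_length_degPair _).1

theorem two_le_of_mem_degSeq : ∀ k ∈ degSeq w, 2 ≤ k := by
  obtain rfl | ⟨u, rfl⟩ := eq_singleton_or_eq_cons_cons_of_half_le_value hw hle
  · decide
  · exact fun k hk ↦
      ((aboveHalf_degPair u).of_mem_reduce_oplus (two_le_length_degPair _).1 k hk).1

theorem degreeShift_injOn_degSeq : Set.InjOn degreeShift {k | k ∈ degSeq w} := by
  obtain rfl | ⟨u, rfl⟩ := eq_singleton_or_eq_cons_cons_of_half_le_value hw hle
  · have hdegrees : ∀ k ∈ degSeq [LR.L], ∀ l ∈ degSeq [LR.L],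
        degreeShift k = degreeShift l → k = l := by decide
    exact fun k hk l hl ↦ hdegrees k hk l hl
  · exact degreeShift_injOn.mono fun k hk ↦
      ((aboveHalf_degPair u).of_mem_reduce_oplus (two_le_length_degPair _).1 k hk).2

end DegSeq

/-! ### Entropy -/

section CountEntropy

variable {α β : Type*} [DecidableEq α] [DecidableEq β]

/-- The unnormalized entropy `-∑ m log m` over the multiplicities `m` of a multiset. -/
noncomputable def countEntropy (s : Multiset α) : ℝ :=
  ∑ a ∈ s.toFinset, Real.negMulLog (s.count a)

theorem countEntropy_add {s t : Multiset α} (h : Disjoint s t) :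
    countEntropy (s + t) = countEntropy s + countEntropy t := by
  rw [countEntropy, Multiset.toFinset_add, Finset.sum_union (Multiset.disjoint_toFinset.2 h)]
  congr 1 <;> refine Finset.sum_congr rfl fun a ha ↦ ?_ <;> rw [Multiset.mem_toFinset] at ha
  · rw [Multiset.count_add, Multiset.count_eq_zero.2 (Multiset.disjoint_left.1 h ha), add_zero]
  · rw [Multiset.count_add, Multiset.count_eq_zero.2 (Multiset.disjoint_right.1 h ha), zero_add]

theorem countEntropy_replicate (n : ℕ) (a : α) :
    countEntropy (Multiset.replicate n a) = Real.negMulLog n := by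
  obtain rfl | hn := eq_or_ne n 0
  · simp [countEntropy]
  · simp [countEntropy, Multiset.toFinset_replicate, hn]

theorem countEntropy_map {s : Multiset α} {f : α → β} (hf : Set.InjOn f {a | a ∈ s}) :
    countEntropy (s.map f) = countEntropy s := by
  rw [countEntropy, Multiset.toFinset_map, Finset.sum_image (by simpa [Set.InjOn] using hf)]
  refine Finset.sum_congr rfl fun a ha ↦ ?_
  rw [Multiset.count_map_eq_count f s hf a (Multiset.mem_toFinset.1 ha)]

theorem sum_negMulLog_count_div_card {s : Multiset α} (hs : s ≠ 0) :
    ∑ a ∈ s.toFinset, Real.negMulLog (s.count a / s.card) =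
      Real.log s.card + countEntropy s / s.card := by
  have hcard : (s.card : ℝ) ≠ 0 := by simpa using hs
  have hsum : ∑ a ∈ s.toFinset, (s.count a : ℝ) = s.card := by
    exact_mod_cast s.toFinset_sum_count_eq
  simp only [div_eq_mul_inv, Real.negMulLog_mul, Finset.sum_add_distrib, ← Finset.mul_sum,
    ← Finset.sum_mul, hsum, countEntropy]
  rw [Real.negMulLog, Real.log_inv]
  field_simp
  ring

end CountEntropy

theorem countEntropy_shiftedDegrees (x : ℕ × ℕ) {s : Multiset ℕ}
    (hs : ∀ k ∈ s, 2 ≤ k) (hinj : Set.InjOn degreeShift {k | k ∈ s}) :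
    countEntropy (shiftedDegrees x s) =
      countEntropy s + Real.negMulLog x.2 + Real.negMulLog x.1 := by
  have hnew : ∀ k ∈ s.map degreeShift, 3 < k := by
    simpa using fun k hk ↦ three_lt_degreeShift (hs k hk)
  have hdisj₂ : Disjoint (s.map degreeShift) (Multiset.replicate x.2 2) :=
    Multiset.disjoint_left.2 fun {k} hk hk₂ ↦ by
      have := hnew k hk
      have := Multiset.eq_of_mem_replicate hk₂
      omega
  have hdisj₃ : Disjoint (s.map degreeShift + Multiset.replicate x.2 2)
      (Multiset.replicate x.1 3) :=
    Multiset.disjoint_right.2 fun {k} hk₃ hk ↦ by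
      obtain rfl := Multiset.eq_of_mem_replicate hk₃
      obtain hk | hk := Multiset.mem_add.1 hk
      · exact (hnew 3 hk).false
      · exact absurd (Multiset.eq_of_mem_replicate hk) (by decide)
  rw [shiftedDegrees, countEntropy_add hdisj₃, countEntropy_add hdisj₂, countEntropy_map hinj,
    countEntropy_replicate, countEntropy_replicate]

theorem Sent_eq_log_add_countEntropy_div (w : List LR) :
    Sent w = Real.log (value w).2 + countEntropy (degSeq w : Multiset ℕ) / (value w).2 := by
  have hcard : Multiset.card (degSeq w : Multiset ℕ) = (value w).2 := length_degSeq w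
  have hne : (degSeq w : Multiset ℕ) ≠ 0 := by
    rw [← Multiset.card_pos, hcard]
    exact value_snd_pos w
  rw [← hcard, ← sum_negMulLog_count_div_card hne, hcard, Sent, ← Finset.sum_neg_distrib]
  simp only [Real.negMulLog, neg_mul, Multiset.coe_count, List.toFinset]

theorem Sent_eq_add_two_mul_Sent_invAddTwo {w : List LR} (hw : IsFareyWord w)
    (hle : (value w).2 ≤ 2 * (value w).1) {x : ℝ}
    (hx : ((value w).1 : ℝ) / (value w).2 = x) :
    Sent w = (x + 2) * Sent (invAddTwo w) + x * Real.log x - (x + 2) * Real.log (x + 2) := by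
  subst hx
  have hp : (0 : ℝ) < (value w).1 := by exact_mod_cast value_fst_pos w
  have hq : (0 : ℝ) < (value w).2 := by exact_mod_cast value_snd_pos w
  have hx₂ : ((value w).1 : ℝ) / (value w).2 + 2 =
      ((value w).1 + 2 * (value w).2) / (value w).2 := by
    field_simp
  rw [Sent_eq_log_add_countEntropy_div w, Sent_eq_log_add_countEntropy_div (invAddTwo w),
    coe_degSeq_invAddTwo hw hle, countEntropy_shiftedDegrees _ (two_le_of_mem_degSeq hw hle)
      (degreeShift_injOn_degSeq hw hle),
    value_invAddTwo, hx₂, Real.log_div hp.ne' hq.ne', Real.log_div (by positivity) hq.ne']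
  simp only [Real.negMulLog]
  push_cast
  field_simp
  ring

theorem add_two_mul_Hent {w : List LR} {x : ℝ} (hx : 0 < x)
    (hw : ((value w).1 : ℝ) / (value w).2 = (x + 2)⁻¹) :
    (x + 2) * Hent w =
      (x + 2) * Sent w + x * Real.log x - (x + 2) * Real.log (x + 2) := by
  have hhalf : (x + 2)⁻¹ ≤ 1 / 2 := by
    rw [one_div]
    exact inv_anti₀ two_pos (by linarith)
  have hcompl : 1 - 2 * (x + 2)⁻¹ = x / (x + 2) := by
    field_simp
    ring
  simp only [Hent, hw, if_pos hhalf, hcompl]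
  rw [Real.log_inv, Real.log_div hx.ne' (by positivity)]
  field_simp
  ring

end HarosEntropy

/-- for every rational x = p/q with 1/2 ≤ x < 1, the entropy satisfies
the de Rham type scaling equation S(x) = (x + 2)·H(1/(x + 2)); equivalently
S(x) = (x + 2)·S(1/(x + 2)) + x·ln x − (x + 2)·ln(x + 2). Here 1/(x+2) = q/(p+2q). -/
theorem statement14 (p q : ℕ) (hcop : Nat.Coprime p q) (hle : q ≤ 2 * p) (hlt : p < q)
    (w w'' : List LR) (hw : IsFareyWord w) (hw'' : IsFareyWord w'')
    (hval : value w = (p, q)) (hval'' : value w'' = (q, p + 2 * q)) :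
    Sent w = ((p : ℝ) / (q : ℝ) + 2) * Hent w'' ∧
    Sent w = ((p : ℝ) / (q : ℝ) + 2) * Sent w''
      + (p : ℝ) / (q : ℝ) * Real.log ((p : ℝ) / (q : ℝ))
      - ((p : ℝ) / (q : ℝ) + 2) * Real.log ((p : ℝ) / (q : ℝ) + 2) := by
  have hp : 0 < p := by simpa [hval] using HarosEntropy.value_fst_pos w
  have hq : 0 < q := hp.trans hlt
  obtain rfl : w'' = HarosEntropy.invAddTwo w :=
    HarosEntropy.value_injOn hw'' rfl (by rw [hval'', HarosEntropy.value_invAddTwo, hval])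
  have hscaling := HarosEntropy.Sent_eq_add_two_mul_Sent_invAddTwo hw
    (by simpa [hval] using hle) (x := (p : ℝ) / q) (by rw [hval])
  have hinv : ((value (HarosEntropy.invAddTwo w)).1 : ℝ) / (value (HarosEntropy.invAddTwo w)).2 =
      ((p : ℝ) / q + 2)⁻¹ := by
    rw [hval'']
    push_cast
    field_simp
  exact ⟨hscaling.trans (HarosEntropy.add_two_mul_Hent (by positivity) hinv).symm, hscaling⟩
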